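/- arXiv:1412.2267 — 2 statements merged into one kernel-verified Lean document; each statement's English description precedes it below -/
import Mathlib

section
/- Every generalized rectangular diagram can be transformed, by a finite sequence of elementary moves of type L, into a diagram in which every vertical edge contains exactly two vertices. -/
namespace RectDiag

/-- A generalized rectangular diagram: a finite subset of `ℝ²`, whose elements are
called the vertices of the diagram. -/
abbrev GRD := Finset (ℝ × ℝ)

/-- Two diagrams are combinatorially equivalent (and hence identified) if one maps onto
the other under `(x, y) ↦ (f x, g y)` for some strictly increasing `f g : ℝ → ℝ`. -/
def CombEquiv (R R' : GRD) : Prop :=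
  ∃ f g : ℝ → ℝ, StrictMono f ∧ StrictMono g ∧
    R' = R.image fun p => (f p.1, g p.2)

/-- Move every vertex on the vertical line `x = a` to the vertical line `x = b`. -/
noncomputable def moveCol (R : GRD) (a b : ℝ) : GRD :=
  R.image fun p => if p.1 = a then (b, p.2) else p

/-- Move every vertex on the horizontal line `y = a` to the horizontal line `y = b`. -/
noncomputable def moveRow (R : GRD) (a b : ℝ) : GRD :=
  R.image fun p => if p.2 = a then (p.1, b) else p

/-- Cyclic permutation: an extreme (rightmost, leftmost, top or bottom) edge is moved
to the opposite side of the diagram; only the coordinate perpendicular to the edge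
changes. -/
def CyclicPermutation (R R' : GRD) : Prop :=
  (∃ a b : ℝ, (∃ p ∈ R, p.1 = a) ∧
    (((∀ p ∈ R, p.1 ≤ a) ∧ ∀ p ∈ R, b < p.1) ∨
     ((∀ p ∈ R, a ≤ p.1) ∧ ∀ p ∈ R, p.1 < b)) ∧
    R' = moveCol R a b) ∨
  (∃ a b : ℝ, (∃ p ∈ R, p.2 = a) ∧
    (((∀ p ∈ R, p.2 ≤ a) ∧ ∀ p ∈ R, b < p.2) ∨
     ((∀ p ∈ R, a ≤ p.2) ∧ ∀ p ∈ R, p.2 < b)) ∧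
    R' = moveRow R a b)

/-- Two sets of reals interleave in the cyclic order: their elements alternate
`a₁ < b₁ < a₂ < b₂` (or with the roles of the two sets exchanged). -/
def Interleave (A B : ℝ → Prop) : Prop :=
  (∃ a₁, A a₁ ∧ ∃ b₁, B b₁ ∧ ∃ a₂, A a₂ ∧ ∃ b₂, B b₂ ∧ a₁ < b₁ ∧ b₁ < a₂ ∧ a₂ < b₂) ∨
  (∃ b₁, B b₁ ∧ ∃ a₁, A a₁ ∧ ∃ b₂, B b₂ ∧ ∃ a₂, A a₂ ∧ b₁ < a₁ ∧ a₁ < b₂ ∧ b₂ < a₂)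

/-- Exchange the vertical lines `x = a` and `x = b` of a diagram. -/
noncomputable def swapCols (R : GRD) (a b : ℝ) : GRD :=
  R.image fun p => if p.1 = a then (b, p.2) else if p.1 = b then (a, p.2) else p

/-- Exchange the horizontal lines `y = a` and `y = b` of a diagram. -/
noncomputable def swapRows (R : GRD) (a b : ℝ) : GRD :=
  R.image fun p => if p.2 = a then (p.1, b) else if p.2 = b then (p.1, a) else p

/-- Commutation: two neighboring parallel edges (no vertex lies strictly between the
two parallel lines containing them) that do not interleave exchange their positions. -/
def Commutation (R R' : GRD) : Prop :=
  (∃ a b : ℝ, a < b ∧ (∃ p ∈ R, p.1 = a) ∧ (∃ p ∈ R, p.1 = b) ∧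
    (∀ p ∈ R, ¬ (a < p.1 ∧ p.1 < b)) ∧
    ¬ Interleave (fun y => (a, y) ∈ R) (fun y => (b, y) ∈ R) ∧
    R' = swapCols R a b) ∨
  (∃ a b : ℝ, a < b ∧ (∃ p ∈ R, p.2 = a) ∧ (∃ p ∈ R, p.2 = b) ∧
    (∀ p ∈ R, ¬ (a < p.2 ∧ p.2 < b)) ∧
    ¬ Interleave (fun x => (x, a) ∈ R) (fun x => (x, b) ∈ R) ∧
    R' = swapRows R a b)

def strictlyBetween (a t b : ℝ) : Prop := (a < t ∧ t < b) ∨ (b < t ∧ t < a)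

/-- Stabilization: a vertex `(x, y)` is replaced by the three other corners of a small
square with corners `(x, y)`, `(x', y)`, `(x, y')`, `(x', y')` (fresh lines `x'`, `y'`,
with no vertex of the diagram strictly between the lines `x, x'` nor between `y, y'`).
The two new short edges (sides of the square through the corner `(x', y')`) emerge from
their common end downward-and-leftward or upward-and-rightward exactly when the square
lies to the upper right or to the lower left of the original vertex (type L,
`typeL = true`); for type N (`typeL = false`) they emerge upward-and-leftward or
downward-and-rightward, i.e. the square lies to the upper left or to the lower right. -/
def Stab (typeL : Bool) (R R' : GRD) : Prop :=
  ∃ x y x' y' : ℝ, (x, y) ∈ R ∧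
    (if typeL then ((x < x' ∧ y < y') ∨ (x' < x ∧ y' < y))
     else ((x' < x ∧ y < y') ∨ (x < x' ∧ y' < y))) ∧
    (∀ p ∈ R, ¬ strictlyBetween x p.1 x') ∧
    (∀ p ∈ R, ¬ strictlyBetween y p.2 y') ∧
    (∀ p ∈ R, p.1 ≠ x') ∧ (∀ p ∈ R, p.2 ≠ y') ∧
    R' = insert (x', y) (insert (x, y') (insert (x', y') (R.erase (x, y))))

/-- End shift.  For adjacent vertices `v₁`, `v₂` on an edge (no vertex of the diagram
between them on the edge), where for type L (`typeL = true`) the vertex `v₂` has the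
greater coordinate along the edge and for type N (`typeL = false`) the smaller one:
either the shifts of `v₁`, `v₂` by `ε > 0` in the positive perpendicular direction are
added and `v₁` is removed, or the shifts by `ε` in the negative perpendicular direction
are added and `v₂` is removed; `ε` is small enough that no vertex of the diagram lies
between (or on) the line through `v₁, v₂` and the line through the shifted vertices. -/
def EndShift (typeL : Bool) (R R' : GRD) : Prop :=
  (∃ a y₁ y₂ ε : ℝ, 0 < ε ∧ y₁ < y₂ ∧ (a, y₁) ∈ R ∧ (a, y₂) ∈ R ∧
    (∀ t : ℝ, (a, t) ∈ R → ¬ (y₁ < t ∧ t < y₂)) ∧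
    (((∀ p ∈ R, ¬ (a < p.1 ∧ p.1 ≤ a + ε)) ∧
       R' = insert (a + ε, y₁) (insert (a + ε, y₂)
         (R.erase (a, if typeL then y₁ else y₂)))) ∨
     ((∀ p ∈ R, ¬ (a - ε ≤ p.1 ∧ p.1 < a)) ∧
       R' = insert (a - ε, y₁) (insert (a - ε, y₂)
         (R.erase (a, if typeL then y₂ else y₁)))))) ∨
  (∃ a x₁ x₂ ε : ℝ, 0 < ε ∧ x₁ < x₂ ∧ (x₁, a) ∈ R ∧ (x₂, a) ∈ R ∧
    (∀ t : ℝ, (t, a) ∈ R → ¬ (x₁ < t ∧ t < x₂)) ∧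
    (((∀ p ∈ R, ¬ (a < p.2 ∧ p.2 ≤ a + ε)) ∧
       R' = insert (x₁, a + ε) (insert (x₂, a + ε)
         (R.erase (if typeL then x₁ else x₂, a)))) ∨
     ((∀ p ∈ R, ¬ (a - ε ≤ p.2 ∧ p.2 < a)) ∧
       R' = insert (x₁, a - ε) (insert (x₂, a - ε)
         (R.erase (if typeL then x₂ else x₁, a))))))

/-- Vertex addition: a new vertex is added on the vertical (respectively horizontal)
line through an existing vertex, provided no vertex of the diagram lies on the
horizontal (respectively vertical) line through the new vertex. -/
def VertexAddition (R R' : GRD) : Prop :=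
  ∃ v : ℝ × ℝ, v ∉ R ∧ R' = insert v R ∧
    (((∃ w ∈ R, w.1 = v.1) ∧ ∀ w ∈ R, w.2 ≠ v.2) ∨
     ((∃ w ∈ R, w.2 = v.2) ∧ ∀ w ∈ R, w.1 ≠ v.1))

/-- An elementary move of type L (`typeL = true`) or N (`typeL = false`): a cyclic
permutation, a commutation, a stabilization or destabilization of the given type, an
end shift of the given type, or a vertex addition. -/
def ElemMove (typeL : Bool) (R R' : GRD) : Prop :=
  CyclicPermutation R R' ∨ Commutation R R' ∨ Stab typeL R R' ∨ Stab typeL R' R ∨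
    EndShift typeL R R' ∨ VertexAddition R R'

/-- One step in a sequence of elementary moves of the given type; since diagrams are
identified up to combinatorial equivalence, combinatorially equivalent diagrams are
also related by a step. -/
def Step (typeL : Bool) (R R' : GRD) : Prop :=
  ElemMove typeL R R' ∨ CombEquiv R R'

/-- In the cyclic order (on `ℝ` closed up into a circle), the elements of `A`, then the
point `u`, then the elements of `B` occur in this cyclic order. -/
def CyclicBetween (A : Finset ℝ) (u : ℝ) (B : Finset ℝ) : Prop :=
  ((∀ a ∈ A, a < u) ∧ (∀ b ∈ B, u < b)) ∨
  ((∀ b ∈ B, u < b) ∧ (∀ a ∈ A, ∀ b ∈ B, b < a)) ∨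
  ((∀ a ∈ A, a < u) ∧ (∀ a ∈ A, ∀ b ∈ B, b < a))

/-- Edge breaking.  The vertices of a horizontal (respectively vertical) edge on the
line `c` are separated into two nonempty parts `S₁`, `S₂`, placed on neighboring lines
`c₁ ≤ c ≤ c₂` (`c₁ < c₂`, with no other vertex of the diagram between the lines `c₁`
and `c₂`), forming edges `e₁` (from `S₁`, on `c₁`) and `e₂` (from `S₂`, on `c₂`, the one
with the greater perpendicular coordinate); the two pieces are joined by a short edge on
a fresh line `u`, which in the cyclic order is greater than the coordinates of the
vertices of `e₂` and smaller than those of `e₁` for type L, and the other way around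
(the roles of `e₁` and `e₂` exchanged) for type N. -/
def EdgeBreaking (typeL : Bool) (R R' : GRD) : Prop :=
  (∃ c c₁ c₂ u : ℝ, ∃ S₁ S₂ : Finset ℝ,
    c₁ < c₂ ∧ c₁ ≤ c ∧ c ≤ c₂ ∧ S₁.Nonempty ∧ S₂.Nonempty ∧ Disjoint S₁ S₂ ∧
    (∀ x : ℝ, (x, c) ∈ R ↔ x ∈ S₁ ∪ S₂) ∧
    (∀ p ∈ R, p.1 ≠ u) ∧
    (∀ p ∈ R, c₁ ≤ p.2 ∧ p.2 ≤ c₂ → p.2 = c) ∧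
    (if typeL then CyclicBetween S₂ u S₁ else CyclicBetween S₁ u S₂) ∧
    R' = ((R.filter fun p => p.2 ≠ c) ∪ S₁.image (fun x => (x, c₁)) ∪
      S₂.image (fun x => (x, c₂)) ∪ {(u, c₁), (u, c₂)})) ∨
  (∃ c c₁ c₂ u : ℝ, ∃ S₁ S₂ : Finset ℝ,
    c₁ < c₂ ∧ c₁ ≤ c ∧ c ≤ c₂ ∧ S₁.Nonempty ∧ S₂.Nonempty ∧ Disjoint S₁ S₂ ∧
    (∀ y : ℝ, (c, y) ∈ R ↔ y ∈ S₁ ∪ S₂) ∧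
    (∀ p ∈ R, p.2 ≠ u) ∧
    (∀ p ∈ R, c₁ ≤ p.1 ∧ p.1 ≤ c₂ → p.1 = c) ∧
    (if typeL then CyclicBetween S₂ u S₁ else CyclicBetween S₁ u S₂) ∧
    R' = ((R.filter fun p => p.1 ≠ c) ∪ S₁.image (fun y => (c₁, y)) ∪
      S₂.image (fun y => (c₂, y)) ∪ {(c₁, u), (c₂, u)}))

/-- `p` lies in the open rectangle `(x₀, x₁) × (y₀, y₁)`. -/
def inRect (x₀ x₁ y₀ y₁ : ℝ) (p : ℝ × ℝ) : Prop :=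
  x₀ < p.1 ∧ p.1 < x₁ ∧ y₀ < p.2 ∧ p.2 < y₁

/-- A flype of type L (in the forward direction): for `x₀ < x₁ < x₂`, `y₀ < y₁ < y₂`,
with rectangles `r_ij = (x_i, x_{i+1}) × (y_j, y_{j+1})`: the rectangle `r₁₁` contains
no vertex; in each of `r₀₁` and `r₁₀`, of any two vertices the right one is higher; and
every vertex `v` in `r₀₀` has a vertex `v₀₁ ∈ r₀₁` with the same `x`-coordinate and a
vertex `v₁₀ ∈ r₁₀` with the same `y`-coordinate.  The move takes each such `v` to the
fourth corner of the rectangle with corners `v`, `v₀₁`, `v₁₀`, all other vertices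
staying fixed. -/
def FlypeLOnce (R R' : GRD) : Prop :=
  ∃ x₀ x₁ x₂ y₀ y₁ y₂ : ℝ, x₀ < x₁ ∧ x₁ < x₂ ∧ y₀ < y₁ ∧ y₁ < y₂ ∧
    (∀ p ∈ R, ¬ inRect x₁ x₂ y₁ y₂ p) ∧
    (∀ p ∈ R, ∀ q ∈ R, inRect x₀ x₁ y₁ y₂ p → inRect x₀ x₁ y₁ y₂ q →
      p.1 < q.1 → p.2 < q.2) ∧
    (∀ p ∈ R, ∀ q ∈ R, inRect x₁ x₂ y₀ y₁ p → inRect x₁ x₂ y₀ y₁ q →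
      p.1 < q.1 → p.2 < q.2) ∧
    ∃ φ : ℝ × ℝ → ℝ × ℝ,
      (∀ p ∈ R, ¬ inRect x₀ x₁ y₀ y₁ p → φ p = p) ∧
      (∀ p ∈ R, inRect x₀ x₁ y₀ y₁ p →
        ∃ q ∈ R, ∃ r ∈ R, inRect x₀ x₁ y₁ y₂ q ∧ q.1 = p.1 ∧
          inRect x₁ x₂ y₀ y₁ r ∧ r.2 = p.2 ∧ φ p = (r.1, q.2)) ∧
      R' = R.image φ

/-- A flype of type L: the move just described or its inverse. -/
def FlypeL (R R' : GRD) : Prop := FlypeLOnce R R' ∨ FlypeLOnce R' R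

/-- A fence diagram: posts are horizontal segments `[l, r] × {y}`, `y ∈ posts` (all
related by a vertical shift); wires are vertical segments recorded as
`(x, bottom level, top level)`, with endpoints interior to posts and no two wires on
the same vertical line. -/
structure Fence where
  posts : Finset ℝ
  l : ℝ
  r : ℝ
  wires : Finset (ℝ × ℝ × ℝ)
  hlr : l < r
  hx : ∀ w ∈ wires, l < w.1 ∧ w.1 < r
  hy : ∀ w ∈ wires, w.2.1 ∈ posts ∧ w.2.2 ∈ posts ∧ w.2.1 < w.2.2
  hinj : ∀ w ∈ wires, ∀ w' ∈ wires, w.1 = w'.1 → w = w'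

/-- Combinatorial equivalence of fence diagrams. -/
def FenceEquiv (F F' : Fence) : Prop :=
  ∃ f g : ℝ → ℝ, StrictMono f ∧ StrictMono g ∧
    F'.l = f F.l ∧ F'.r = f F.r ∧
    F'.posts = F.posts.image g ∧
    F'.wires = F.wires.image fun w => (f w.1, g w.2.1, g w.2.2)

/-- The wire on the vertical line `x` joining the posts at levels `p` and `q`. -/
noncomputable def mkWire (x p q : ℝ) : ℝ × ℝ × ℝ := (x, min p q, max p q)

/-- Twirl: the top (respectively bottom) post is moved to the opposite side, taking
along all wires attached to it. -/
def Twirl (F F' : Fence) : Prop :=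
  F'.l = F.l ∧ F'.r = F.r ∧
  ((∃ t b : ℝ, t ∈ F.posts ∧ (∀ y ∈ F.posts, y ≤ t) ∧ (∀ y ∈ F.posts, b < y) ∧
     F'.posts = insert b (F.posts.erase t) ∧
     F'.wires = F.wires.image fun w => if w.2.2 = t then (w.1, b, w.2.1) else w) ∨
   (∃ t b : ℝ, b ∈ F.posts ∧ (∀ y ∈ F.posts, b ≤ y) ∧ (∀ y ∈ F.posts, y < t) ∧
     F'.posts = insert t (F.posts.erase b) ∧
     F'.wires = F.wires.image fun w => if w.2.1 = b then (w.1, w.2.2, t) else w))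

/-- Turn: the rightmost (respectively leftmost) wire is moved to the opposite side. -/
def Turn (F F' : Fence) : Prop :=
  F'.l = F.l ∧ F'.r = F.r ∧ F'.posts = F.posts ∧
  ((∃ w ∈ F.wires, ∃ x : ℝ, (∀ w' ∈ F.wires, w'.1 ≤ w.1) ∧
     F.l < x ∧ (∀ w' ∈ F.wires, w' ≠ w → x < w'.1) ∧ x < w.1 ∧
     F'.wires = insert (x, w.2) (F.wires.erase w)) ∨
   (∃ w ∈ F.wires, ∃ x : ℝ, (∀ w' ∈ F.wires, w.1 ≤ w'.1) ∧
     x < F.r ∧ (∀ w' ∈ F.wires, w' ≠ w → w'.1 < x) ∧ w.1 < x ∧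
     F'.wires = insert (x, w.2) (F.wires.erase w)))

/-- Two wires interleave if exactly one endpoint level of one lies strictly between the
endpoint levels of the other. -/
def WiresInterleave (w w' : ℝ × ℝ × ℝ) : Prop :=
  (w.2.1 < w'.2.1 ∧ w'.2.1 < w.2.2 ∧ w.2.2 < w'.2.2) ∨
  (w'.2.1 < w.2.1 ∧ w.2.1 < w'.2.2 ∧ w'.2.2 < w.2.2)

/-- Slip: two neighboring non-interleaving wires exchange their horizontal positions. -/
def Slip (F F' : Fence) : Prop :=
  F'.l = F.l ∧ F'.r = F.r ∧ F'.posts = F.posts ∧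
  ∃ w₁ ∈ F.wires, ∃ w₂ ∈ F.wires, w₁.1 < w₂.1 ∧
    (∀ w ∈ F.wires, ¬ (w₁.1 < w.1 ∧ w.1 < w₂.1)) ∧
    ¬ WiresInterleave w₁ w₂ ∧
    F'.wires = insert (w₂.1, w₁.2) (insert (w₁.1, w₂.2) ((F.wires.erase w₁).erase w₂))

/-- `a`, `b`, `c` occur in this cyclic order on `ℝ` closed up into a circle. -/
def CyclicOrd3 (a b c : ℝ) : Prop :=
  (a < b ∧ b < c) ∨ (b < c ∧ c < a) ∨ (c < a ∧ a < b)

/-- Slide: given two neighboring wires, the left joining posts at levels `a` and `b`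
and the right joining posts at levels `a` and `c` with `a < b < c < a` in the cyclic
order, they are replaced by two wires at the same horizontal positions, the left
joining levels `b` and `c` and the right joining levels `b` and `a`. -/
def Slide (F F' : Fence) : Prop :=
  F'.l = F.l ∧ F'.r = F.r ∧ F'.posts = F.posts ∧
  ∃ a b c x₁ x₂ : ℝ, x₁ < x₂ ∧ CyclicOrd3 a b c ∧
    mkWire x₁ a b ∈ F.wires ∧ mkWire x₂ a c ∈ F.wires ∧
    (∀ w ∈ F.wires, ¬ (x₁ < w.1 ∧ w.1 < x₂)) ∧
    F'.wires = insert (mkWire x₁ b c) (insert (mkWire x₂ b a)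
      ((F.wires.erase (mkWire x₁ a b)).erase (mkWire x₂ a c)))

/-- Inflation: a new post is added at a fresh vertical level and joined to some
existing post by one new wire (on a fresh vertical line). -/
def Inflation (F F' : Fence) : Prop :=
  F'.l = F.l ∧ F'.r = F.r ∧
  ∃ n m x : ℝ, n ∉ F.posts ∧ m ∈ F.posts ∧
    F.l < x ∧ x < F.r ∧ (∀ w ∈ F.wires, w.1 ≠ x) ∧
    F'.posts = insert n F.posts ∧
    F'.wires = insert (mkWire x n m) F.wires

/-- A fence move: a twirl, a turn, a slip, a slide, an inflation or a deflation. -/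
def FenceMove (F F' : Fence) : Prop :=
  Twirl F F' ∨ Turn F F' ∨ Slip F F' ∨ Slide F F' ∨ Inflation F F' ∨ Inflation F' F

/-- One step in a sequence of fence moves; combinatorially equivalent fence diagrams
are identified. -/
def FenceStep (F F' : Fence) : Prop := FenceMove F F' ∨ FenceEquiv F F'

/-- `R(F)`: the generalized rectangular diagram whose vertices are the endpoints of
the wires of the fence diagram `F`. -/
noncomputable def fenceToGRD (F : Fence) : GRD :=
  F.wires.image (fun w => (w.1, w.2.1)) ∪ F.wires.image (fun w => (w.1, w.2.2))

/-- Every vertical edge of the diagram contains exactly two vertices. -/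
def VertTwo (R : GRD) : Prop :=
  ∀ a : ℝ, (∃ y : ℝ, (a, y) ∈ R) →
    ∃ y₁ y₂ : ℝ, y₁ < y₂ ∧ ∀ y : ℝ, ((a, y) ∈ R ↔ (y = y₁ ∨ y = y₂))

/-- `F` is a fence diagram `F(R)` of the diagram `R` (each of whose vertical edges is
assumed to contain exactly two vertices): its wires are the vertical edges of `R` and
its posts are horizontal segments at exactly the levels of the horizontal edges of
`R`. -/
def IsFenceOf (R : GRD) (F : Fence) : Prop :=
  F.posts = R.image Prod.snd ∧
  ∀ w : ℝ × ℝ × ℝ,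
    (w ∈ F.wires ↔ ((w.1, w.2.1) ∈ R ∧ (w.1, w.2.2) ∈ R ∧ w.2.1 < w.2.2))

/-!
Assign to a vertical edge with `n` vertices the defect `|n - 2|`. An edge with a single vertex is
completed to a pair by a vertex addition. On an edge with `n ≥ 3` vertices, an end shift applied to
two adjacent vertices leaves `n - 1` vertices and splits off a new vertical edge with exactly two,
so that again the total defect drops by one. When no defect is left, every vertical edge
has two vertices.
-/

/-- The vertical edge of `R` on the line `x = a`, recorded by the ordinates of its vertices. It is
empty if the line contains no vertex of `R`. -/
noncomputable def verticalEdge (R : GRD) (a : ℝ) : Finset ℝ :=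
  R.preimage (Prod.mk a) (Prod.mk_right_injective a).injOn

/-- The distance of the number of vertices of `R` on the line `x = a` from `2`, where a line without
vertices is not counted as an edge and has defect `0`. -/
noncomputable def edgeDefect (R : GRD) (a : ℝ) : ℕ :=
  if verticalEdge R a = ∅ then 0 else Nat.dist (verticalEdge R a).card 2

/-- The sum of the defects of the vertical edges of `R`: it measures how far `R` is from having
exactly two vertices on every vertical edge. -/
noncomputable def totalDefect (R : GRD) : ℕ :=
  ∑ a ∈ R.image Prod.fst, edgeDefect R a

section Defect

variable {R R' : GRD} {a b x y y₁ y₂ z : ℝ}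

@[simp]
lemma mem_verticalEdge : y ∈ verticalEdge R a ↔ (a, y) ∈ R := by
  simp [verticalEdge]

@[simp]
lemma verticalEdge_insert_self :
    verticalEdge (insert (a, y) R) a = insert y (verticalEdge R a) := by
  ext; simp

lemma verticalEdge_insert_of_ne (h : x ≠ a) :
    verticalEdge (insert (a, y) R) x = verticalEdge R x := by
  ext; simp [h]

@[simp]
lemma verticalEdge_erase_self :
    verticalEdge (R.erase (a, y)) a = (verticalEdge R a).erase y := by
  ext; simp

lemma verticalEdge_erase_of_ne (h : x ≠ a) :
    verticalEdge (R.erase (a, y)) x = verticalEdge R x := by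
  ext; simp [h]

lemma verticalEdge_eq_empty_iff : verticalEdge R a = ∅ ↔ a ∉ R.image Prod.fst := by
  simp [Finset.eq_empty_iff_forall_notMem]

lemma edgeDefect_of_nonempty (h : (verticalEdge R a).Nonempty) :
    edgeDefect R a = Nat.dist (verticalEdge R a).card 2 :=
  if_neg h.ne_empty

lemma edgeDefect_eq_zero_of_card_eq_two (h : (verticalEdge R a).card = 2) :
    edgeDefect R a = 0 := by
  simp [edgeDefect, h]

lemma edgeDefect_congr (h : verticalEdge R' a = verticalEdge R a) :
    edgeDefect R' a = edgeDefect R a := by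
  simp only [edgeDefect, h]

lemma totalDefect_eq_sum_of_subset {s : Finset ℝ} (hs : R.image Prod.fst ⊆ s) :
    totalDefect R = ∑ a ∈ s, edgeDefect R a :=
  Finset.sum_subset hs fun _ _ ha => if_pos (verticalEdge_eq_empty_iff.2 ha)

lemma totalDefect_lt_of_edgeDefect_le (hle : ∀ x, x ≠ a → edgeDefect R' x ≤ edgeDefect R x)
    (hlt : edgeDefect R' a < edgeDefect R a) : totalDefect R' < totalDefect R := by
  let s := insert a (R.image Prod.fst ∪ R'.image Prod.fst)
  have hR : R.image Prod.fst ⊆ s := Finset.subset_union_left.trans (Finset.subset_insert _ _)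
  have hR' : R'.image Prod.fst ⊆ s := Finset.subset_union_right.trans (Finset.subset_insert _ _)
  rw [totalDefect_eq_sum_of_subset hR, totalDefect_eq_sum_of_subset hR']
  refine Finset.sum_lt_sum (fun x _ => ?_) ⟨a, Finset.mem_insert_self _ _, hlt⟩
  obtain rfl | hx := eq_or_ne x a
  exacts [hlt.le, hle x hx]

lemma totalDefect_insert_lt (hcard : (verticalEdge R a).card = 1) (hy : (a, y) ∉ R) :
    totalDefect (insert (a, y) R) < totalDefect R := by
  have hne : (verticalEdge R a).Nonempty := Finset.card_pos.1 (by omega)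
  have hcard' : (verticalEdge (insert (a, y) R) a).card = 2 := by
    rw [verticalEdge_insert_self, Finset.card_insert_of_notMem (by simpa using hy), hcard]
  refine totalDefect_lt_of_edgeDefect_le
    (fun x hx => (edgeDefect_congr (verticalEdge_insert_of_ne hx)).le) ?_
  rw [edgeDefect_eq_zero_of_card_eq_two hcard', edgeDefect_of_nonempty hne, hcard]
  decide

lemma totalDefect_split_lt (hcard : 3 ≤ (verticalEdge R a).card) (hz : (a, z) ∈ R)
    (hb : b ∉ R.image Prod.fst) (hy : y₁ ≠ y₂) :
    totalDefect (insert (b, y₁) (insert (b, y₂) (R.erase (a, z)))) < totalDefect R := by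
  have ha : a ∈ R.image Prod.fst := Finset.mem_image_of_mem Prod.fst hz
  have hab : a ≠ b := ne_of_mem_of_not_mem ha hb
  set R' := insert (b, y₁) (insert (b, y₂) (R.erase (a, z)))
  have edge_a : verticalEdge R' a = (verticalEdge R a).erase z := by
    rw [verticalEdge_insert_of_ne hab, verticalEdge_insert_of_ne hab, verticalEdge_erase_self]
  have edge_b : verticalEdge R' b = {y₁, y₂} := by
    rw [verticalEdge_insert_self, verticalEdge_insert_self, verticalEdge_erase_of_ne hab.symm,
      verticalEdge_eq_empty_iff.2 hb, insert_empty_eq]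
  have edge_of_ne (x : ℝ) (hxa : x ≠ a) (hxb : x ≠ b) : verticalEdge R' x = verticalEdge R x := by
    rw [verticalEdge_insert_of_ne hxb, verticalEdge_insert_of_ne hxb, verticalEdge_erase_of_ne hxa]
  have card_a : (verticalEdge R' a).card = (verticalEdge R a).card - 1 := by
    rw [edge_a, Finset.card_erase_of_mem (mem_verticalEdge.2 hz)]
  refine totalDefect_lt_of_edgeDefect_le (a := a) (fun x hxa => ?_) ?_
  · obtain rfl | hxb := eq_or_ne x b
    · rw [edgeDefect_eq_zero_of_card_eq_two (by rw [edge_b, Finset.card_pair hy])]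
      exact Nat.zero_le _
    · exact (edgeDefect_congr (edge_of_ne x hxa hxb)).le
  · rw [edgeDefect_of_nonempty (Finset.card_pos.1 (by omega)),
      edgeDefect_of_nonempty (Finset.card_pos.1 (by omega)), card_a,
      Nat.dist_eq_sub_of_le_right (by omega), Nat.dist_eq_sub_of_le_right (by omega)]
    omega

end Defect

lemma vertTwo_of_card_verticalEdge_eq_two {R : GRD}
    (h : ∀ a, (verticalEdge R a).Nonempty → (verticalEdge R a).card = 2) : VertTwo R := by
  rintro a ⟨y, hy⟩
  obtain ⟨u, v, huv, hedge⟩ := Finset.card_eq_two.1 (h a ⟨y, mem_verticalEdge.2 hy⟩)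
  have mem_iff (t : ℝ) : (a, t) ∈ R ↔ t = u ∨ t = v := by
    rw [← mem_verticalEdge, hedge, Finset.mem_insert, Finset.mem_singleton]
  obtain hlt | hlt := huv.lt_or_gt
  · exact ⟨u, v, hlt, mem_iff⟩
  · exact ⟨v, u, hlt, fun t => (mem_iff t).trans or_comm⟩

lemma exists_consecutive_of_nontrivial {α : Type*} [LinearOrder α] {s : Finset α}
    (hs : s.Nontrivial) :
    ∃ a ∈ s, ∃ b ∈ s, a < b ∧ ∀ t ∈ s, ¬ (a < t ∧ t < b) := by
  obtain ⟨u, hu, v, hv, huv⟩ := Set.Nontrivial.exists_lt hs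
  have not_isMax : ¬ IsMax (⟨u, hu⟩ : s) := not_isMax_iff.2 ⟨⟨v, hv⟩, huv⟩
  obtain ⟨b, hub⟩ := exists_covBy_of_wellFoundedLT not_isMax
  exact ⟨u, hu, b, b.2, hub.lt, fun t ht h => hub.2 (c := ⟨t, ht⟩) h.1 h.2⟩

lemma exists_vertexAddition_totalDefect_lt {R : GRD} {a : ℝ}
    (hcard : (verticalEdge R a).card = 1) :
    ∃ R', VertexAddition R R' ∧ totalDefect R' < totalDefect R := by
  obtain ⟨v, hv⟩ : (verticalEdge R a).Nonempty := Finset.card_pos.1 (by omega)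
  obtain ⟨y, hy⟩ := Infinite.exists_notMem_finset (R.image Prod.snd)
  have fresh : ∀ w ∈ R, w.2 ≠ y := fun w hw h => hy (h ▸ Finset.mem_image_of_mem Prod.snd hw)
  have hay : (a, y) ∉ R := fun h => fresh _ h rfl
  exact ⟨insert (a, y) R,
    ⟨(a, y), hay, rfl, Or.inl ⟨⟨(a, v), mem_verticalEdge.1 hv, rfl⟩, fresh⟩⟩,
    totalDefect_insert_lt hcard hay⟩

lemma exists_endShift_totalDefect_lt (typeL : Bool) {R : GRD} {a : ℝ}
    (hcard : 3 ≤ (verticalEdge R a).card) :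
    ∃ R', EndShift typeL R R' ∧ totalDefect R' < totalDefect R := by
  have nontrivial : (verticalEdge R a).Nontrivial :=
    Finset.one_lt_card_iff_nontrivial.1 (by omega)
  obtain ⟨y₁, hy₁, y₂, hy₂, hlt, consecutive⟩ := exists_consecutive_of_nontrivial nontrivial
  simp only [mem_verticalEdge] at hy₁ hy₂ consecutive
  obtain ⟨b, hab, hb⟩ := Order.exists_between_finsets {a} ((R.image Prod.fst).filter (a < ·))
    (by simp)
  replace hab : a < b := hab a (Finset.mem_singleton_self a)
  have gap : ∀ p ∈ R, ¬ (a < p.1 ∧ p.1 ≤ b) := fun p hp h =>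
    (hb p.1 (Finset.mem_filter.2 ⟨Finset.mem_image_of_mem Prod.fst hp, h.1⟩)).not_ge h.2
  have hbR : b ∉ R.image Prod.fst := fun h =>
    lt_irrefl b (hb b (Finset.mem_filter.2 ⟨h, hab⟩))
  have removed_mem : (a, if typeL then y₁ else y₂) ∈ R := by
    cases typeL
    exacts [hy₂, hy₁]
  refine ⟨_, Or.inl ⟨a, y₁, y₂, b - a, sub_pos.2 hab, hlt, hy₁, hy₂, consecutive, Or.inl ⟨?_, rfl⟩⟩,
    ?_⟩ <;> rw [add_sub_cancel]
  · exact gap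
  · exact totalDefect_split_lt hcard removed_mem hbR hlt.ne

lemma exists_elemMove_totalDefect_lt (typeL : Bool) {R : GRD} (hR : ¬ VertTwo R) :
    ∃ R', ElemMove typeL R R' ∧ totalDefect R' < totalDefect R := by
  obtain ⟨a, hne, hcard⟩ : ∃ a, (verticalEdge R a).Nonempty ∧ (verticalEdge R a).card ≠ 2 := by
    contrapose! hR
    exact vertTwo_of_card_verticalEdge_eq_two hR
  have hpos := hne.card_pos
  obtain h1 | h3 : (verticalEdge R a).card = 1 ∨ 3 ≤ (verticalEdge R a).card := by omega
  · obtain ⟨R', hmove, hlt⟩ := exists_vertexAddition_totalDefect_lt h1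
    exact ⟨R', by simp only [ElemMove, hmove, or_true], hlt⟩
  · obtain ⟨R', hmove, hlt⟩ := exists_endShift_totalDefect_lt typeL h3
    exact ⟨R', by simp only [ElemMove, hmove, true_or, or_true], hlt⟩

theorem statement14_general (typeL : Bool) (R : GRD) :
    ∃ R' : GRD, Relation.ReflTransGen (ElemMove typeL) R R' ∧ VertTwo R' := by
  induction hn : totalDefect R using Nat.strong_induction_on generalizing R with
  | _ n ih =>
    by_cases hR : VertTwo R
    · exact ⟨R, .refl, hR⟩
    · obtain ⟨R₁, hmove, hlt⟩ := exists_elemMove_totalDefect_lt typeL hR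
      obtain ⟨R', hmoves, hR'⟩ := ih _ (hn ▸ hlt) R₁ rfl
      exact ⟨R', .head hmove hmoves, hR'⟩

/-- every generalized rectangular diagram can be transformed by finitely
many elementary moves of type L into a diagram each of whose vertical edges contains
exactly two vertices. -/
theorem statement14 (R : GRD) :
    ∃ R' : GRD, Relation.ReflTransGen (Step true) R R' ∧ VertTwo R' := by
  obtain ⟨R', hmoves, hR'⟩ := statement14_general true R
  exact ⟨R', Relation.ReflTransGen.mono (fun _ _ => Or.inl) R R' hmoves, hR'⟩

end RectDiag
end

section
/- If a generalized rectangular diagram R' is obtained from a generalized rectangular diagram R by a stabilization of type N, then R' can be obtained from R by performing one vertex addition followed by one end shift of type N. -/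
namespace RectDiag

/-!
A stabilization replaces a vertex `(x, y)` by the other three corners of a small square. Add the
corner `(x, y')` as a new vertex. Then `(x, y)` and `(x, y')` are adjacent on the line through them,
and shifting this pair to the line `x'` of the opposite side, while removing `(x, y)`, leaves
exactly the three corners wanted. The type of a stabilization prescribes the direction from
`(x, y)` to the opposite corner, and this is what makes `(x, y)` the vertex removed by an end shift
of the same type.
-/

theorem CombEquiv.refl (R : GRD) : CombEquiv R R :=
  ⟨id, id, strictMono_id, strictMono_id, Finset.image_id.symm⟩

theorem not_strictlyBetween_left (a b : ℝ) : ¬ strictlyBetween a a b := by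
  simp [strictlyBetween]

theorem not_strictlyBetween_right (a b : ℝ) : ¬ strictlyBetween a b b := by
  simp [strictlyBetween]

theorem VertexAddition.insert_of_mem_column {R : GRD} {x y y' : ℝ} (hxy : (x, y) ∈ R)
    (hfresh : ∀ p ∈ R, p.2 ≠ y') : VertexAddition R (insert (x, y') R) :=
  ⟨(x, y'), fun hmem => hfresh _ hmem rfl, rfl, .inl ⟨⟨(x, y), hxy, rfl⟩, hfresh⟩⟩

section EndShift

variable {typeL : Bool} {S : GRD} {x x' : ℝ}

theorem EndShift.right {y₁ y₂ : ℝ} (hx : x < x') (hy : y₁ < y₂)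
    (h₁ : (x, y₁) ∈ S) (h₂ : (x, y₂) ∈ S) (hadj : ∀ t, (x, t) ∈ S → ¬ (y₁ < t ∧ t < y₂))
    (hgap : ∀ p ∈ S, ¬ (x < p.1 ∧ p.1 ≤ x')) :
    EndShift typeL S
      (insert (x', y₁) (insert (x', y₂) (S.erase (x, if typeL then y₁ else y₂)))) := by
  refine .inl ⟨x, y₁, y₂, x' - x, sub_pos.2 hx, hy, h₁, h₂, hadj, .inl ?_⟩
  rw [add_sub_cancel]
  exact ⟨hgap, rfl⟩

theorem EndShift.left {y₁ y₂ : ℝ} (hx : x' < x) (hy : y₁ < y₂)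
    (h₁ : (x, y₁) ∈ S) (h₂ : (x, y₂) ∈ S) (hadj : ∀ t, (x, t) ∈ S → ¬ (y₁ < t ∧ t < y₂))
    (hgap : ∀ p ∈ S, ¬ (x' ≤ p.1 ∧ p.1 < x)) :
    EndShift typeL S
      (insert (x', y₁) (insert (x', y₂) (S.erase (x, if typeL then y₂ else y₁)))) := by
  refine .inl ⟨x, y₁, y₂, x - x', sub_pos.2 hx, hy, h₁, h₂, hadj, .inr ?_⟩
  rw [sub_sub_cancel]
  exact ⟨hgap, rfl⟩

theorem EndShift.of_square {y y' : ℝ} (hxy : (x, y) ∈ S) (hxy' : (x, y') ∈ S)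
    (hdir : if typeL then (x < x' ∧ y < y') ∨ (x' < x ∧ y' < y)
      else (x' < x ∧ y < y') ∨ (x < x' ∧ y' < y))
    (hadj : ∀ t, (x, t) ∈ S → ¬ strictlyBetween y t y')
    (hgap : ∀ p ∈ S, ¬ strictlyBetween x p.1 x') (hfresh : ∀ p ∈ S, p.1 ≠ x') :
    EndShift typeL S (insert (x', y) (insert (x', y') (S.erase (x, y)))) := by
  have adj_up : ∀ t, (x, t) ∈ S → ¬ (y < t ∧ t < y') := fun t ht h => hadj t ht (.inl h)
  have adj_down : ∀ t, (x, t) ∈ S → ¬ (y' < t ∧ t < y) := fun t ht h => hadj t ht (.inr h)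
  have gap_right : ∀ p ∈ S, ¬ (x < p.1 ∧ p.1 ≤ x') := fun p hp h =>
    hgap p hp (.inl ⟨h.1, h.2.lt_of_ne (hfresh p hp)⟩)
  have gap_left : ∀ p ∈ S, ¬ (x' ≤ p.1 ∧ p.1 < x) := fun p hp h =>
    hgap p hp (.inr ⟨h.1.lt_of_ne' (hfresh p hp), h.2⟩)
  cases typeL with
  | true =>
    obtain ⟨hx, hy⟩ | ⟨hx, hy⟩ := hdir
    · exact .right hx hy hxy hxy' adj_up gap_right
    · rw [Finset.insert_comm]
      exact .left hx hy hxy' hxy adj_down gap_left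
  | false =>
    obtain ⟨hx, hy⟩ | ⟨hx, hy⟩ := hdir
    · exact .left hx hy hxy hxy' adj_up gap_left
    · rw [Finset.insert_comm]
      exact .right hx hy hxy' hxy adj_down gap_right

end EndShift

theorem statement19_general (typeL : Bool) (R R' : GRD) (h : Stab typeL R R') :
    ∃ S : GRD, VertexAddition R S ∧ EndShift typeL S R' := by
  obtain ⟨x, y, x', y', hxy, hdir, hcols, hrows, hfresh_x, hfresh_y, rfl⟩ := h
  refine ⟨insert (x, y') R, .insert_of_mem_column hxy hfresh_y, ?_⟩
  have hcorner : (x, y') ≠ (x, y) := fun h => hfresh_y _ hxy (congrArg Prod.snd h).symm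
  have hrows' : ∀ p ∈ insert (x, y') R, ¬ strictlyBetween y p.2 y' :=
    (Finset.forall_mem_insert ..).2 ⟨not_strictlyBetween_right y y', hrows⟩
  have hcols' : ∀ p ∈ insert (x, y') R, ¬ strictlyBetween x p.1 x' :=
    (Finset.forall_mem_insert ..).2 ⟨not_strictlyBetween_left x x', hcols⟩
  have hfresh_x' : ∀ p ∈ insert (x, y') R, p.1 ≠ x' :=
    (Finset.forall_mem_insert ..).2 ⟨hfresh_x (x, y) hxy, hfresh_x⟩
  rw [Finset.insert_comm (x, y'), ← Finset.erase_insert_of_ne hcorner]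
  exact .of_square (Finset.mem_insert_of_mem hxy) (Finset.mem_insert_self _ _) hdir
    (fun t ht => hrows' (x, t) ht) hcols' hfresh_x'

/-- a stabilization of type N is the composition of one vertex addition
followed by one end shift of type N (up to the identification of combinatorially
equivalent diagrams). -/
theorem statement19 (R R' : GRD) (h : Stab false R R') :
    ∃ S T : GRD, VertexAddition R S ∧ EndShift false S T ∧ CombEquiv T R' := by
  obtain ⟨S, hadd, hshift⟩ := statement19_general false R R' h
  exact ⟨S, R', hadd, hshift, .refl R'⟩

end RectDiag
end
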